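/- Assume the element setup. Then the generalized Stokes–Dirac structure D_h is a Dirac structure: D_h equals its orthogonal complement in (F_p × F_q × B_p × B_p*) × (E_p × E_q × B_p* × B_p) with respect to the symmetrized pairing ⟨⟨(F₁,E₁),(F₂,E₂)⟩⟩ := P(F₁,E₂) + P(F₂,E₁) associated with the power pairing P. -/

import Mathlib

/-- The generalized Stokes-Dirac structure on a single element: the set of tuples
`((f_p, f_q, y_p, y*), (e_p, e_q, u*, u_p))` satisfying the defining relations. -/
def diracSet (p q : ℤ) {E_p F_p E_q F_q B_p B_q : Type*}
    [AddCommGroup E_p] [Module ℝ E_p] [AddCommGroup F_p] [Module ℝ F_p]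
    [AddCommGroup E_q] [Module ℝ E_q] [AddCommGroup F_q] [Module ℝ F_q]
    [AddCommGroup B_p] [Module ℝ B_p] [AddCommGroup B_q] [Module ℝ B_q]
    (dpq : E_q →ₗ[ℝ] F_p) (dqp : E_p →ₗ[ℝ] F_q)
    (trp : E_p →ₗ[ℝ] B_p) (trq : E_q →ₗ[ℝ] B_q)
    (Q : B_q →ₗ[ℝ] Module.Dual ℝ B_p)
    (T_p : Module.Dual ℝ B_p →ₗ[ℝ] F_p) (T_q : B_p →ₗ[ℝ] F_q) :
    Set ((F_p × F_q × B_p × Module.Dual ℝ B_p) ×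
         (E_p × E_q × Module.Dual ℝ B_p × B_p)) :=
  {x | x.1.1 = ((-1 : ℝ) ^ (p * q + 1)) • dpq x.2.2.1
        + (((-1 : ℝ) ^ (p * q + 1 + q)) * (1 / 2)) • T_p (Q (trq x.2.2.1))
        + ((-1 : ℝ) ^ (p * q + 1 + q)) • T_p x.2.2.2.1
    ∧ x.1.2.1 = dqp x.2.1 + (((-1 : ℝ) ^ p) * (1 / 2)) • T_q (trp x.2.1)
        + ((-1 : ℝ) ^ p) • T_q x.2.2.2.2
    ∧ x.1.2.2.2 = -(((-1 : ℝ) ^ p) • Q (trq x.2.2.1))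
    ∧ x.1.2.2.1 = -(((-1 : ℝ) ^ p) • trp x.2.1)}

/-- An integer power of `-1` squares to one. -/
lemma neg_one_zpow_mul_self_real (k : ℤ) : (-1 : ℝ) ^ k * (-1 : ℝ) ^ k = 1 := by
  rw [← mul_zpow]; norm_num

/-- The generalized Stokes-Dirac structure is a Dirac structure: it equals its
orthogonal complement with respect to the symmetrized pairing associated with the
power pairing `P((f_p,f_q,y_p,y*),(e_p,e_q,u*,u_p)) = ⟨e_p|f_p⟩_p + ⟨e_q|f_q⟩_q
+ y*(u_p) + u*(y_p)`. -/
theorem generalized_stokes_dirac_is_dirac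
    (n p q : ℤ) (hpq : p + q = n + 1)
    {E_p F_p E_q F_q B_p B_q : Type*}
    [AddCommGroup E_p] [Module ℝ E_p] [FiniteDimensional ℝ E_p]
    [AddCommGroup F_p] [Module ℝ F_p] [FiniteDimensional ℝ F_p]
    [AddCommGroup E_q] [Module ℝ E_q] [FiniteDimensional ℝ E_q]
    [AddCommGroup F_q] [Module ℝ F_q] [FiniteDimensional ℝ F_q]
    [AddCommGroup B_p] [Module ℝ B_p] [FiniteDimensional ℝ B_p]
    [AddCommGroup B_q] [Module ℝ B_q] [FiniteDimensional ℝ B_q]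
    (pairP : E_p →ₗ[ℝ] F_p →ₗ[ℝ] ℝ)
    (hP₁ : ∀ e : E_p, (∀ f : F_p, pairP e f = 0) → e = 0)
    (hP₂ : ∀ f : F_p, (∀ e : E_p, pairP e f = 0) → f = 0)
    (pairQ : E_q →ₗ[ℝ] F_q →ₗ[ℝ] ℝ)
    (hQ₁ : ∀ e : E_q, (∀ f : F_q, pairQ e f = 0) → e = 0)
    (hQ₂ : ∀ f : F_q, (∀ e : E_q, pairQ e f = 0) → f = 0)
    (dpq : E_q →ₗ[ℝ] F_p) (dqp : E_p →ₗ[ℝ] F_q)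
    (trp : E_p →ₗ[ℝ] B_p) (trq : E_q →ₗ[ℝ] B_q)
    (Q : B_q →ₗ[ℝ] Module.Dual ℝ B_p)
    (hibp : ∀ (w : E_q) (v : E_p),
      (-1 : ℝ) ^ (p * (n - p)) * pairP v (dpq w)
        = (-1 : ℝ) ^ p * pairQ w (dqp v) + Q (trq w) (trp v))
    (T_p : Module.Dual ℝ B_p →ₗ[ℝ] F_p)
    (hTp : ∀ (v : E_p) (l : Module.Dual ℝ B_p),
      pairP v (T_p l) = (-1 : ℝ) ^ ((p - 1) * (q - 1)) * l (trp v))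
    (T_q : B_p →ₗ[ℝ] F_q)
    (hTq : ∀ (w : E_q) (u : B_p), pairQ w (T_q u) = Q (trq w) u) :
    diracSet p q dpq dqp trp trq Q T_p T_q =
      {x | ∀ y ∈ diracSet p q dpq dqp trp trq Q T_p T_q,
        (pairP y.2.1 x.1.1 + pairQ y.2.2.1 x.1.2.1
          + x.1.2.2.2 y.2.2.2.2 + y.2.2.2.1 x.1.2.2.1)
        + (pairP x.2.1 y.1.1 + pairQ x.2.2.1 y.1.2.1
          + y.1.2.2.2 x.2.2.2.2 + x.2.2.2.1 y.1.2.2.1) = 0} := by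
  have haa := neg_one_zpow_mul_self_real p
  have hbb := neg_one_zpow_mul_self_real q
  have hss := neg_one_zpow_mul_self_real (p * q)
  have ne : (-1 : ℝ) ≠ 0 := by norm_num
  have inv (k : ℤ) : ((-1 : ℝ) ^ k)⁻¹ = (-1 : ℝ) ^ k :=
    inv_eq_of_mul_eq_one_left (neg_one_zpow_mul_self_real k)
  have sign_rev : (-1 : ℝ) ^ (p * (n - p)) = (-1 : ℝ) ^ (p * q) * (-1 : ℝ) ^ p := by
    rw [show p * (n - p) = p * q + -p by linear_combination -p * hpq, zpow_add₀ ne, zpow_neg, inv]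
  have sign_Tp : (-1 : ℝ) ^ ((p - 1) * (q - 1))
      = -((-1 : ℝ) ^ (p * q) * (-1 : ℝ) ^ p * (-1 : ℝ) ^ q) := by
    rw [show (p - 1) * (q - 1) = p * q + -p + -q + 1 by ring, zpow_add₀ ne, zpow_add₀ ne,
      zpow_add₀ ne, zpow_neg, zpow_neg, inv, inv, zpow_one]
    ring
  have sign_r : (-1 : ℝ) ^ (p * q + 1) = -(-1 : ℝ) ^ (p * q) := by
    rw [zpow_add₀ ne, zpow_one]; ring
  have sign_rq : (-1 : ℝ) ^ (p * q + 1 + q) = -((-1 : ℝ) ^ (p * q) * (-1 : ℝ) ^ q) := by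
    rw [zpow_add₀ ne, sign_r]; ring
  simp only [diracSet, sign_r, sign_rq]
  simp only [sign_rev] at hibp
  simp only [sign_Tp] at hTp
  generalize (-1 : ℝ) ^ p = a at *
  generalize (-1 : ℝ) ^ q = b at *
  generalize (-1 : ℝ) ^ (p * q) = s at *
  -- The flow `f_p` tested against an effort, rewritten through integration by parts.
  have pair_fp (v : E_p) (w : E_q) (l : Module.Dual ℝ B_p) :
      pairP v (-s • dpq w + (-(s * b) * (1 / 2)) • T_p (Q (trq w)) + -(s * b) • T_p l)
        = -pairQ w (dqp v) - a / 2 * Q (trq w) (trp v) + a * l (trp v) := by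
    simp only [map_add, map_smul, smul_eq_mul, hTp]
    have h := hibp w v
    linear_combination (-a) * h + (s * pairP v (dpq w)) * haa - pairQ w (dqp v) * haa
      + (a * s * s * (Q (trq w) (trp v) / 2 + l (trp v))) * hbb
      + (a * (Q (trq w) (trp v) / 2 + l (trp v))) * hss
  have pair_fq (w : E_q) (v : E_p) (u : B_p) :
      pairQ w (dqp v + (a * (1 / 2)) • T_q (trp v) + a • T_q u)
        = pairQ w (dqp v) + a / 2 * Q (trq w) (trp v) + a * Q (trq w) u := by
    simp only [map_add, map_smul, smul_eq_mul, hTq]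
    ring
  ext ⟨⟨fp, fq, yp, ys⟩, ⟨ep, eq, us, up⟩⟩
  constructor
  · rintro ⟨h₁, h₂, h₃, h₄⟩ ⟨⟨fp', fq', yp', ys'⟩, ⟨ep', eq', us', up'⟩⟩ ⟨h₁', h₂', h₃', h₄'⟩
    dsimp only at *
    subst h₁ h₂ h₃ h₄ h₁' h₂' h₃' h₄'
    simp only [pair_fp, pair_fq, map_neg, map_smul, LinearMap.neg_apply, LinearMap.smul_apply,
      smul_eq_mul]
    ring
  · intro h
    -- Every effort extends to an element of the structure, so orthogonality can be tested on it.
    have test (v : E_p) (w : E_q) (l : Module.Dual ℝ B_p) (u : B_p) :=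
      h ⟨⟨-s • dpq w + (-(s * b) * (1 / 2)) • T_p (Q (trq w)) + -(s * b) • T_p l,
          dqp v + (a * (1 / 2)) • T_q (trp v) + a • T_q u, -(a • trp v), -(a • Q (trq w))⟩,
        ⟨v, w, l, u⟩⟩ ⟨rfl, rfl, rfl, rfl⟩
    simp only [pair_fp, pair_fq, map_neg, map_smul, LinearMap.neg_apply, LinearMap.smul_apply,
      smul_eq_mul] at test
    refine ⟨?_, ?_, ?_, ?_⟩ <;> dsimp only
    · refine sub_eq_zero.mp (hP₂ _ fun v => ?_)
      have t := test v 0 0 0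
      simp only [map_zero, LinearMap.zero_apply] at t
      rw [map_sub, pair_fp]
      linear_combination t
    · refine sub_eq_zero.mp (hQ₂ _ fun w => ?_)
      have t := test 0 w 0 0
      simp only [map_zero, LinearMap.zero_apply] at t
      rw [map_sub, pair_fq]
      linear_combination t
    · ext u
      have t := test 0 0 0 u
      simp only [map_zero, LinearMap.zero_apply] at t
      simp only [LinearMap.neg_apply, LinearMap.smul_apply, smul_eq_mul]
      linear_combination t
    · refine sub_eq_zero.mp ((Module.forall_dual_apply_eq_zero_iff ℝ _).mp fun l => ?_)
      have t := test 0 0 l 0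
      simp only [map_zero, LinearMap.zero_apply] at t
      simp only [map_sub, map_neg, map_smul, smul_eq_mul]
      linear_combination t
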